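/- For every integer n ≥ 1 there exists a prefix-exchange map with n parts on the Cantor space ℕ → Bool whose order as a permutation is exactly 2^{n−1} (namely the map g_n defined by g_n(1^k 0 w) = 0^k 1 w for 0 ≤ k < n−1 and g_n(1^{n−1} w) = 0^{n−1} w); in particular, the bound 2^{n−1} on the sum of orbit lengths for torsion elements of Thompson's group V represented by trees with n leaves is attained. -/

import Mathlib

/-- Concatenation of a finite binary word `u` with an infinite sequence `x`
in the Cantor space `ℕ → Bool`. -/
def cat (u : List Bool) (x : ℕ → Bool) : ℕ → Bool :=
  fun i => u.getD i (x (i - u.length))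

/-- A finite family of binary words is a complete prefix code if every point of the
Cantor space has exactly one of the words as a prefix. -/
def IsCompletePrefixCode {m : ℕ} (u : Fin m → List Bool) : Prop :=
  ∀ x : ℕ → Bool, ∃! i : Fin m, ∃ w : ℕ → Bool, x = cat (u i) w

/-- A prefix-exchange map with `n` parts: there are complete prefix codes
`(u_1, …, u_n)` and `(v_1, …, v_n)` and a permutation `σ` of `{1, …, n}` with
`g(u_i ++ w) = v_{σ(i)} ++ w` for all `i` and `w`. -/
def IsPrefixExchange (n : ℕ) (g : (ℕ → Bool) → ℕ → Bool) : Prop :=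
  ∃ u v : Fin n → List Bool, IsCompletePrefixCode u ∧ IsCompletePrefixCode v ∧
    ∃ σ : Equiv.Perm (Fin n),
      ∀ (i : Fin n) (w : ℕ → Bool), g (cat (u i) w) = cat (v (σ i)) w

/-- `g` satisfies the defining rules of the map `g_n`:
`g_n(1^k 0 w) = 0^k 1 w` for `0 ≤ k < n-1`, and `g_n(1^{n-1} w) = 0^{n-1} w`. -/
def GnRules (n : ℕ) (g : (ℕ → Bool) → ℕ → Bool) : Prop :=
  (∀ k, k < n - 1 → ∀ w : ℕ → Bool,
      g (cat (List.replicate k true ++ [false]) w)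
        = cat (List.replicate k false ++ [true]) w) ∧
  (∀ w : ℕ → Bool,
      g (cat (List.replicate (n - 1) true) w) = cat (List.replicate (n - 1) false) w)

/-!
On the first `n - 1` digits, read as a binary number with the least significant digit first, `g_n`
adds one modulo `2 ^ (n - 1)`: it changes leading ones into zeros until the carry is absorbed.
Its square fixes the first digit and acts on the remaining ones as `g_(n - 1)`, so the period of
every point doubles each time `n` grows by one.
-/

theorem cat_nil (x : ℕ → Bool) : cat [] x = x := rfl

theorem cat_cons_zero (b : Bool) (u : List Bool) (x : ℕ → Bool) : cat (b :: u) x 0 = b := rfl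

theorem cat_cons_succ (b : Bool) (u : List Bool) (x : ℕ → Bool) (i : ℕ) :
    cat (b :: u) x (i + 1) = cat u x i := by
  simp only [cat, List.getD_cons_succ, List.length_cons, Nat.add_sub_add_right]

theorem eq_cat_cons_iff {x : ℕ → Bool} {b : Bool} {u : List Bool} {w : ℕ → Bool} :
    x = cat (b :: u) w ↔ x 0 = b ∧ (fun i => x (i + 1)) = cat u w := by
  simp only [funext_iff, ← Nat.and_forall_add_one (p := fun i => x i = cat (b :: u) w i),
    cat_cons_zero, cat_cons_succ]

theorem cat_cons (b : Bool) (u : List Bool) (x : ℕ → Bool) :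
    cat (b :: u) x = cat [b] (cat u x) :=
  eq_cat_cons_iff.2 ⟨rfl, funext (cat_cons_succ b u x)⟩

theorem cat_singleton_head_tail (x : ℕ → Bool) : cat [x 0] (fun i => x (i + 1)) = x :=
  (eq_cat_cons_iff.2 ⟨rfl, (cat_nil _).symm⟩).symm

theorem cat_injective (u : List Bool) : Function.Injective (cat u) := by
  intro x y h
  funext i
  simpa [cat] using congrFun h (i + u.length)

theorem isCompletePrefixCode_nil : IsCompletePrefixCode fun _ : Fin 1 => [] :=
  fun x => ⟨0, ⟨x, (cat_nil x).symm⟩, fun _ _ => Subsingleton.elim _ _⟩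

theorem IsCompletePrefixCode.cons {m : ℕ} {u : Fin m → List Bool} (hu : IsCompletePrefixCode u)
    (b : Bool) :
    IsCompletePrefixCode (Fin.cons [!b] fun i => b :: u i : Fin (m + 1) → List Bool) := by
  intro x
  by_cases hx : x 0 = b
  · obtain ⟨i, ⟨w, hw⟩, hi⟩ := hu fun i => x (i + 1)
    refine ⟨i.succ, ⟨w, eq_cat_cons_iff.2 ⟨hx, hw⟩⟩, Fin.cases ?_ fun j => ?_⟩
    · rintro ⟨w', hw'⟩
      exact absurd ((eq_cat_cons_iff.1 hw').1.symm.trans hx) (Bool.not_ne_self b)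
    · rintro ⟨w', hw'⟩
      exact congrArg Fin.succ (hi j ⟨w', (eq_cat_cons_iff.1 hw').2⟩)
  · refine ⟨0, ⟨_, eq_cat_cons_iff.2 ⟨Bool.eq_not.2 hx, (cat_nil _).symm⟩⟩,
      Fin.cases (fun _ => rfl) fun j => ?_⟩
    rintro ⟨w, hw⟩
    exact absurd (eq_cat_cons_iff.1 hw).1 hx

/-- The comb code `!b, b(!b), …, b^(m-1)(!b), b^m`, built by adding branchings at the root: for
`b = true` these are the prefixes read by `g_(m+1)`, for `b = false` the ones it writes. -/
def combCode (b : Bool) : (m : ℕ) → Fin (m + 1) → List Bool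
  | 0 => fun _ => []
  | m + 1 => Fin.cons [!b] fun i => b :: combCode b m i

theorem isCompletePrefixCode_combCode (b : Bool) (m : ℕ) :
    IsCompletePrefixCode (combCode b m) := by
  induction m with
  | zero => exact isCompletePrefixCode_nil
  | succ m ih => exact ih.cons b

theorem combCode_castSucc (b : Bool) {m : ℕ} (k : Fin m) :
    combCode b m k.castSucc = List.replicate k b ++ [!b] := by
  induction m with
  | zero => exact k.elim0
  | succ m ih =>
    cases k using Fin.cases with
    | zero => rfl
    | succ k => exact congrArg (b :: ·) (ih k)

theorem combCode_last (b : Bool) (m : ℕ) : combCode b m (Fin.last m) = List.replicate m b := by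
  induction m with
  | zero => rfl
  | succ m ih => exact congrArg (b :: ·) ih

/-- The map `g_(m+1)`: addition of one with carry on the first `m` digits, least significant digit
first, the carry out of these digits being dropped. -/
def odometer : ℕ → (ℕ → Bool) → ℕ → Bool
  | 0, x => x
  | m + 1, x =>
    if x 0 then cat [false] (odometer m fun i => x (i + 1)) else cat [true] fun i => x (i + 1)

theorem odometer_succ_cat_true (m : ℕ) (x : ℕ → Bool) :
    odometer (m + 1) (cat [true] x) = cat [false] (odometer m x) := rfl

theorem odometer_succ_cat_false (m : ℕ) (x : ℕ → Bool) :
    odometer (m + 1) (cat [false] x) = cat [true] x := rfl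

theorem odometer_succ_apply_zero (m : ℕ) (x : ℕ → Bool) : odometer (m + 1) x 0 = !x 0 := by
  rw [← cat_singleton_head_tail x]
  cases x 0 <;> rfl

theorem odometer_cat_combCode (m : ℕ) (i : Fin (m + 1)) (w : ℕ → Bool) :
    odometer m (cat (combCode true m i) w) = cat (combCode false m i) w := by
  induction m with
  | zero => rfl
  | succ m ih =>
    cases i using Fin.cases with
    | zero => exact odometer_succ_cat_false m w
    | succ i =>
      simp only [combCode, Fin.cons_succ]
      rw [cat_cons, odometer_succ_cat_true, ih, ← cat_cons]

theorem gnRules_odometer (m : ℕ) : GnRules (m + 1) (odometer m) := by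
  refine ⟨fun k hk w => ?_, fun w => ?_⟩
  · simpa only [combCode_castSucc, Bool.not_true, Bool.not_false] using
      odometer_cat_combCode m (Fin.castSucc ⟨k, hk⟩) w
  · simpa only [combCode_last, Nat.add_sub_cancel] using odometer_cat_combCode m (Fin.last m) w

theorem isPrefixExchange_odometer (m : ℕ) : IsPrefixExchange (m + 1) (odometer m) :=
  ⟨combCode true m, combCode false m, isCompletePrefixCode_combCode true m,
    isCompletePrefixCode_combCode false m, 1, odometer_cat_combCode m⟩

theorem semiconj_cat_odometer (m : ℕ) (b : Bool) :
    Function.Semiconj (cat [b]) (odometer m) (odometer (m + 1))^[2] := by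
  intro x
  cases b <;> rfl

theorem isPeriodicPt_odometer_succ_two_mul_iff (m k : ℕ) (b : Bool) (x : ℕ → Bool) :
    Function.IsPeriodicPt (odometer (m + 1)) (2 * k) (cat [b] x) ↔
      Function.IsPeriodicPt (odometer m) k x := by
  have iterate_two_mul : (odometer (m + 1))^[2 * k] (cat [b] x) = cat [b] ((odometer m)^[k] x) := by
    rw [Function.iterate_mul, ((semiconj_cat_odometer m b).iterate_right k).eq]
  rw [Function.IsPeriodicPt, Function.IsFixedPt, iterate_two_mul, (cat_injective [b]).eq_iff]
  rfl

theorem odometer_succ_iterate_apply_zero (m j : ℕ) (x : ℕ → Bool) :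
    (odometer (m + 1))^[j] x 0 = Bool.not^[j] (x 0) :=
  Function.Semiconj.iterate_right (f := fun y : ℕ → Bool => y 0)
    (odometer_succ_apply_zero m) j x

theorem isPeriodicPt_odometer_iff {m j : ℕ} {x : ℕ → Bool} :
    Function.IsPeriodicPt (odometer m) j x ↔ 2 ^ m ∣ j := by
  induction m generalizing j x with
  | zero =>
    have fixed : Function.IsFixedPt (odometer 0) x := rfl
    exact iff_of_true (fixed.isPeriodicPt j) (one_dvd j)
  | succ m ih =>
    rcases Nat.even_or_odd' j with ⟨k, rfl | rfl⟩
    · rw [← cat_singleton_head_tail x, isPeriodicPt_odometer_succ_two_mul_iff, ih, pow_succ',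
        Nat.mul_dvd_mul_iff_left two_pos]
    · have not_periodic : ¬ Function.IsPeriodicPt (odometer (m + 1)) (2 * k + 1) x := by
        intro h
        have h0 := congrFun h.eq 0
        rw [odometer_succ_iterate_apply_zero, Bool.involutive_not.iterate_two_mul_add_one] at h0
        exact Bool.not_ne_self _ h0
      have not_dvd : ¬ 2 ^ (m + 1) ∣ 2 * k + 1 := fun h =>
        Nat.two_not_dvd_two_mul_add_one k ((dvd_pow_self 2 m.succ_ne_zero).trans h)
      exact iff_of_false not_periodic not_dvd

/-- For every `n ≥ 1` there is a prefix-exchange map with `n` parts whose order as a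
permutation of the Cantor space is exactly `2^(n-1)`, namely the map `g_n`; in
particular the bound `2^(n-1)` on orders of torsion elements of Thompson's group `V`
represented by trees with `n` leaves is attained. -/
theorem exists_prefix_exchange_of_maximal_order (n : ℕ) (hn : 1 ≤ n) :
    ∃ g : (ℕ → Bool) → ℕ → Bool, GnRules n g ∧ IsPrefixExchange n g ∧
      g^[2 ^ (n - 1)] = id ∧ ∀ j, 0 < j → j < 2 ^ (n - 1) → g^[j] ≠ id := by
  obtain ⟨m, rfl⟩ := Nat.exists_eq_add_of_le' hn
  refine ⟨odometer m, gnRules_odometer m, isPrefixExchange_odometer m, ?_, fun j hj hlt h => ?_⟩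
  · funext x
    exact isPeriodicPt_odometer_iff.2 dvd_rfl
  · have periodic : Function.IsPeriodicPt (odometer m) j fun _ => false := congrFun h _
    exact Nat.not_dvd_of_pos_of_lt hj hlt (isPeriodicPt_odometer_iff.1 periodic)
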